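/- No deterministic online algorithm for online unit-length busy time scheduling on heterogeneous machines has competitive ratio less than 2: for every ε > 0 there is an even integer M and a machine configuration with exactly two types — type 0 with cost 1 and capacity 1, and type 1 with cost M and capacity M³ — such that for every deterministic online algorithm A there exists an instance J with agreeable deadlines satisfying cost(A(J)) ≥ (2 − ε)·OPT(J). -/

import Mathlib

structure SchedInstance where
  jobs : Finset ℕ
  r : ℕ → ℤ
  d : ℕ → ℤ
  window : ∀ j ∈ jobs, r j ≤ d j

structure Batch where
  btype : ℕ
  time : ℤ
  bjobs : Finset ℕ
deriving DecidableEq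

/-- A valid schedule when there are exactly two machine types (types 0 and 1). -/
def ValidSchedule2 (B : ℕ → ℕ) (P : SchedInstance) (S : Finset Batch) : Prop :=
  (∀ X ∈ S, X.btype < 2) ∧
  (∀ X ∈ S, X.bjobs.card ≤ B X.btype) ∧
  (∀ X ∈ S, ∀ j ∈ X.bjobs, j ∈ P.jobs ∧ P.r j ≤ X.time ∧ X.time ≤ P.d j) ∧
  (∀ X ∈ S, ∀ Y ∈ S, X ≠ Y → Disjoint X.bjobs Y.bjobs) ∧
  (∀ j ∈ P.jobs, ∃ X ∈ S, j ∈ X.bjobs)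

noncomputable def schedCost (c : ℕ → ℝ) (S : Finset Batch) : ℝ :=
  ∑ X ∈ S, c X.btype

noncomputable def OPT2 (c : ℕ → ℝ) (B : ℕ → ℕ) (P : SchedInstance) : ℝ :=
  sInf {x : ℝ | ∃ S : Finset Batch, ValidSchedule2 B P S ∧ schedCost c S = x}

def Agreeable (P : SchedInstance) : Prop :=
  ∀ j ∈ P.jobs, ∀ j' ∈ P.jobs, P.r j < P.r j' → P.d j ≤ P.d j'

def Causal (A : SchedInstance → Finset Batch) : Prop :=
  ∀ P P' : SchedInstance, ∀ τ : ℤ,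
    P.jobs.filter (fun j => P.r j ≤ τ) = P'.jobs.filter (fun j => P'.r j ≤ τ) →
    (∀ j ∈ P.jobs.filter (fun j => P.r j ≤ τ), P.r j = P'.r j ∧ P.d j = P'.d j) →
    (A P).filter (fun X => X.time ≤ τ) = (A P').filter (fun X => X.time ≤ τ)

/-!
The adversary releases phases of `N = 2 * M ^ 2` jobs with distinct deadlines, a new phase right
after the algorithm executes its first large batch at or after the previous release. If the
algorithm never answers a phase, it runs the `N` jobs of that phase alone, at twice the cost of one
large batch for each of the at most `M` phases. Otherwise it pays for one large batch per phase and
runs alone the set `K` of jobs due before the large batch of their phase. Executing large batches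
only at the even, or only at the odd, releases serves two phases per batch; the two schedules
together cost `|K|` plus one large batch per phase, up to lower order terms, so one of them costs
about half of what the algorithm pays.
-/

open Finset

theorem isLeast_of_forall_le_mem_iff {α : Type*} [LinearOrder α] {s s' : Set α} {a : α}
    (hs : IsLeast s a) (h : ∀ t ≤ a, t ∈ s ↔ t ∈ s') : IsLeast s' a := by
  refine ⟨(h a le_rfl).1 hs.1, fun t ht => ?_⟩
  by_contra! hlt
  exact (hs.2 ((h t hlt.le).2 ht)).not_gt hlt

theorem div_lt_of_lt_mul_right {j n N : ℕ} (h : j < n * N) : j / N < n :=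
  Nat.div_lt_of_lt_mul (by rwa [mul_comm])

section Schedules

variable {c : ℕ → ℝ} {B : ℕ → ℕ} {P : SchedInstance} {S : Finset Batch}

theorem schedCost_eq_add (hS : ∀ X ∈ S, X.btype < 2) :
    schedCost c S = c 0 * #{X ∈ S | X.btype = 0} + c 1 * #{X ∈ S | X.btype = 1} := by
  have hmaps : ∀ X ∈ S, X.btype ∈ range 2 := fun X hX => mem_range.2 (hS X hX)
  rw [schedCost, ← sum_fiberwise_of_maps_to' hmaps]
  simp [sum_range_succ, mul_comm]

theorem schedCost_nonneg (hc₀ : 0 ≤ c 0) (hc₁ : 0 ≤ c 1) (hS : ∀ X ∈ S, X.btype < 2) :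
    0 ≤ schedCost c S := by
  rw [schedCost_eq_add hS]
  positivity

theorem OPT2_nonneg (hc₀ : 0 ≤ c 0) (hc₁ : 0 ≤ c 1) : 0 ≤ OPT2 c B P := by
  refine Real.sInf_nonneg ?_
  rintro x ⟨S, hS, rfl⟩
  exact schedCost_nonneg hc₀ hc₁ hS.1

theorem OPT2_le_schedCost (hc₀ : 0 ≤ c 0) (hc₁ : 0 ≤ c 1) (hS : ValidSchedule2 B P S) :
    OPT2 c B P ≤ schedCost c S := by
  refine csInf_le ⟨0, ?_⟩ ⟨S, hS, rfl⟩
  rintro x ⟨S', hS', rfl⟩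
  exact schedCost_nonneg hc₀ hc₁ hS'.1

/-- The schedule which, for each `i ∈ I`, executes at time `t i` on a machine of type `k i` the
jobs `j` with `a j = i`. -/
def assignedSchedule {ι : Type*} [DecidableEq ι] (P : SchedInstance) (I : Finset ι) (k : ι → ℕ)
    (t : ι → ℤ) (a : ℕ → ι) : Finset Batch :=
  I.image fun i => ⟨k i, t i, {j ∈ P.jobs | a j = i}⟩

theorem validSchedule2_assignedSchedule {ι : Type*} [DecidableEq ι] {I : Finset ι} {k : ι → ℕ}
    {t : ι → ℤ} {a : ℕ → ι} (hk : ∀ i ∈ I, k i < 2)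
    (hcap : ∀ i ∈ I, #{j ∈ P.jobs | a j = i} ≤ B (k i)) (ha : ∀ j ∈ P.jobs, a j ∈ I)
    (hwindow : ∀ j ∈ P.jobs, t (a j) ∈ Set.Icc (P.r j) (P.d j)) :
    ValidSchedule2 B P (assignedSchedule P I k t a) := by
  simp only [ValidSchedule2, assignedSchedule, forall_mem_image, exists_mem_image, mem_filter]
  refine ⟨hk, hcap, ?_, ?_, fun j hj => ⟨a j, ha j hj, hj, rfl⟩⟩
  · rintro i - j ⟨hj, rfl⟩
    exact ⟨hj, hwindow j hj⟩
  · intro i _ i' _ hne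
    rw [disjoint_filter]
    rintro j - rfl rfl
    exact hne rfl

theorem OPT2_le_sum_of_assignment {ι : Type*} [DecidableEq ι] {I : Finset ι} {k : ι → ℕ}
    {t : ι → ℤ} {a : ℕ → ι} (hc₀ : 0 ≤ c 0) (hc₁ : 0 ≤ c 1) (hk : ∀ i ∈ I, k i < 2)
    (hcap : ∀ i ∈ I, #{j ∈ P.jobs | a j = i} ≤ B (k i)) (ha : ∀ j ∈ P.jobs, a j ∈ I)
    (hwindow : ∀ j ∈ P.jobs, t (a j) ∈ Set.Icc (P.r j) (P.d j)) :
    OPT2 c B P ≤ ∑ i ∈ I, c (k i) := by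
  have hvalid := validSchedule2_assignedSchedule hk hcap ha hwindow
  refine (OPT2_le_schedCost hc₀ hc₁ hvalid).trans (sum_image_le_of_nonneg ?_)
  simp only [forall_mem_image]
  intro i hi
  have := hk i hi
  interval_cases k i <;> assumption

theorem OPT2_le_of_alone_or_large {W T : Finset ℕ} {key : ℕ → ℕ} {ρ : ℕ → ℤ} (hc₀ : 0 ≤ c 0)
    (hc₁ : 0 ≤ c 1) (hB₀ : 1 ≤ B 0) (hcap : ∀ i ∈ T, #{j ∈ P.jobs | key j = i} ≤ B 1)
    (hkey : ∀ j ∈ P.jobs, j ∉ W → key j ∈ T)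
    (hwindow : ∀ j ∈ P.jobs, j ∉ W → ρ (key j) ∈ Set.Icc (P.r j) (P.d j)) :
    OPT2 c B P ≤ c 0 * #W + c 1 * #T := by
  have h := OPT2_le_sum_of_assignment (B := B) (P := P) (I := W.disjSum T)
    (k := Sum.elim (fun _ => 0) fun _ => 1) (t := Sum.elim P.r ρ)
    (a := fun j => if j ∈ W then .inl j else .inr (key j)) hc₀ hc₁ ?_ ?_ ?_ ?_
  · simpa [mul_comm] using h
  · simp
  · simp only [mem_disjSum]
    rintro _ (⟨i, -, rfl⟩ | ⟨i, hi, rfl⟩)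
    · refine (card_le_one.2 ?_).trans hB₀
      grind
    · refine (card_le_card fun j hj => ?_).trans (hcap i hi)
      grind
  · intro j hj
    by_cases hjW : j ∈ W <;> simp [hjW, hkey j hj]
  · intro j hj
    by_cases hjW : j ∈ W
    · simp [hjW, P.window j hj]
    · simpa [hjW] using hwindow j hj hjW

/-- The times at which the schedule `S` executes a large batch, that is, one of type `1`. -/
def largeTimes (S : Finset Batch) : Finset ℤ :=
  {X ∈ S | X.btype = 1}.image Batch.time

theorem mem_largeTimes {t : ℤ} : t ∈ largeTimes S ↔ ∃ X ∈ S, X.btype = 1 ∧ X.time = t := by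
  simp [largeTimes, and_assoc]

theorem card_le_card_filter_btype_eq_zero {K : Finset ℕ} (hS : ValidSchedule2 B P S) (hB₀ : B 0 ≤ 1)
    (hK : K ⊆ P.jobs) (hmiss : ∀ j ∈ K, ∀ t ∈ largeTimes S, t ∉ Set.Icc (P.r j) (P.d j)) :
    #K ≤ #{X ∈ S | X.btype = 0} := by
  obtain ⟨htype, hcap, hwindow, -, hcover⟩ := hS
  have hsub : K ⊆ {X ∈ S | X.btype = 0}.biUnion Batch.bjobs := by
    intro j hj
    obtain ⟨X, hX, hjX⟩ := hcover j (hK hj)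
    have hlarge : X.btype ≠ 1 := fun h =>
      hmiss j hj X.time (mem_largeTimes.2 ⟨X, hX, h, rfl⟩) (hwindow X hX j hjX).2
    have := htype X hX
    exact mem_biUnion.2 ⟨X, mem_filter.2 ⟨hX, by omega⟩, hjX⟩
  calc #K ≤ #({X ∈ S | X.btype = 0}.biUnion Batch.bjobs) := card_le_card hsub
    _ ≤ #{X ∈ S | X.btype = 0} * 1 := by
      refine card_biUnion_le_card_mul _ _ _ fun X hX => ?_
      obtain ⟨hX, hX₀⟩ := mem_filter.1 hX
      exact (hX₀ ▸ hcap X hX).trans hB₀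
    _ = #{X ∈ S | X.btype = 0} := mul_one _

theorem le_schedCost_of_forall_notMem_Icc {K : Finset ℕ} (hS : ValidSchedule2 B P S)
    (hc₀ : 0 ≤ c 0) (hc₁ : 0 ≤ c 1) (hB₀ : B 0 ≤ 1) (hK : K ⊆ P.jobs)
    (hmiss : ∀ j ∈ K, ∀ t ∈ largeTimes S, t ∉ Set.Icc (P.r j) (P.d j)) :
    c 0 * #K + c 1 * #(largeTimes S) ≤ schedCost c S := by
  have hsmall := card_le_card_filter_btype_eq_zero hS hB₀ hK hmiss
  have hlarge : #(largeTimes S) ≤ #{X ∈ S | X.btype = 1} := card_image_le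
  rw [schedCost_eq_add hS.1]
  gcongr

theorem Causal.mem_largeTimes_iff {A : SchedInstance → Finset Batch} (hA : Causal A)
    {P P' : SchedInstance} {t : ℤ}
    (hjobs : ∀ j, j ∈ P.jobs ∧ P.r j ≤ t ↔ j ∈ P'.jobs ∧ P'.r j ≤ t)
    (hrd : ∀ j ∈ P.jobs, P.r j ≤ t → P.r j = P'.r j ∧ P.d j = P'.d j) :
    t ∈ largeTimes (A P) ↔ t ∈ largeTimes (A P') := by
  have h := hA P P' t (by ext j; simpa using hjobs j) fun j hj =>
    hrd j (mem_filter.1 hj).1 (mem_filter.1 hj).2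
  have hmem : ∀ X : Batch, X.time = t → (X ∈ A P ↔ X ∈ A P') := fun X hX => by
    simpa [hX] using Finset.ext_iff.1 h X
  simp only [mem_largeTimes]
  grind

end Schedules

/-- A sequence of release times of phases of `N` jobs, the job `j` belonging to phase `j / N` and
having deadline `j`. The bound `le` says that a phase is released no later than its first
deadline. -/
structure ReleaseSeq (N : ℕ) where
  toFun : ℕ → ℤ
  mono : Monotone toFun
  le : ∀ i, toFun i ≤ (i * N : ℕ)

namespace ReleaseSeq

variable {N : ℕ}

instance : CoeFun (ReleaseSeq N) fun _ => ℕ → ℤ := ⟨toFun⟩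

/-- The sequence all of whose phases are released at time `0`, where the adversary starts. -/
def zero (N : ℕ) : ReleaseSeq N where
  toFun _ := 0
  mono := monotone_const
  le _ := by positivity

/-- The sequence that follows `R` up to phase `n` and releases all later phases at time `b`. -/
def extend (R : ReleaseSeq N) (n : ℕ) (b : ℤ) (hRb : R n ≤ b) (hb : b ≤ ((n + 1) * N : ℕ)) :
    ReleaseSeq N where
  toFun i := if i ≤ n then R i else b
  mono i i' hi := by
    dsimp only
    split_ifs with h h' h'
    · exact R.mono hi
    · exact (R.mono h).trans hRb
    · omega
    · rfl
  le i := by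
    split_ifs with h
    · exact R.le i
    · exact hb.trans (by gcongr; omega)

/-- The instance consisting of the first `n` phases. -/
def phaseInstance (R : ReleaseSeq N) (n : ℕ) : SchedInstance where
  jobs := range (n * N)
  r j := R (j / N)
  d j := j
  window j _ := (R.le (j / N)).trans (by exact_mod_cast Nat.div_mul_le_self j N)

theorem agreeable_phaseInstance (R : ReleaseSeq N) (n : ℕ) : Agreeable (R.phaseInstance n) := by
  intro j _ j' _ hr
  by_contra! hd
  have hlt : j' < j := by simpa [phaseInstance] using hd
  exact hr.not_ge (R.mono (Nat.div_le_div_right hlt.le))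

theorem jobs_phaseInstance_nonempty (R : ReleaseSeq N) {n : ℕ} (hn : 0 < n) (hN : 0 < N) :
    (R.phaseInstance n).jobs.Nonempty :=
  nonempty_range_iff.2 (by positivity)

end ReleaseSeq

theorem Causal.mem_largeTimes_phaseInstance_iff {A : SchedInstance → Finset Batch} (hA : Causal A)
    {N m n : ℕ} {R R' : ReleaseSeq N} {t : ℤ} (hmn : m ≤ n) (hR : ∀ i < m, R i = R' i)
    (ht : ∀ i, m ≤ i → i < n → t < R' i) :
    t ∈ largeTimes (A (R.phaseInstance m)) ↔ t ∈ largeTimes (A (R'.phaseInstance n)) := by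
  refine hA.mem_largeTimes_iff (fun j => ?_) fun j hj _ =>
    ⟨hR _ (div_lt_of_lt_mul_right (mem_range.1 hj)), rfl⟩
  simp only [ReleaseSeq.phaseInstance, mem_range]
  constructor
  · rintro ⟨hj, hjt⟩
    exact ⟨hj.trans_le (by gcongr), hR _ (div_lt_of_lt_mul_right hj) ▸ hjt⟩
  · rintro ⟨hj, hjt⟩
    have hlt : j / N < m := by
      by_contra! hge
      exact (ht _ hge (div_lt_of_lt_mul_right hj)).not_ge hjt
    have hN : 0 < N := Nat.pos_of_mul_pos_left (Nat.zero_lt_of_lt hj)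
    exact ⟨Nat.lt_mul_of_div_lt hlt hN, hR _ hlt ▸ hjt⟩

section OfflineCost

variable {c : ℕ → ℝ} {B : ℕ → ℕ} {N : ℕ}

/-- The jobs of the first `n` phases that are due before `ρ i`, where `i` is their phase. -/
def dueBefore (N n : ℕ) (ρ : ℕ → ℤ) : Finset ℕ :=
  {j ∈ range (n * N) | (j : ℤ) < ρ (j / N)}

theorem mem_dueBefore {n j : ℕ} {ρ : ℕ → ℤ} :
    j ∈ dueBefore N n ρ ↔ j < n * N ∧ (j : ℤ) < ρ (j / N) := by
  simp [dueBefore]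

theorem card_dueBefore_le_card_dueBefore_sub_one_add (N n : ℕ) (ρ : ℕ → ℤ) :
    #(dueBefore N n ρ) ≤ #(dueBefore N n fun i => ρ i - 1) + n := by
  have hsub : dueBefore N n ρ ⊆
      (dueBefore N n fun i => ρ i - 1) ∪ (range n).image fun i => (ρ i - 1).toNat := by
    intro j hj
    obtain ⟨hjn, hjρ⟩ := mem_dueBefore.1 hj
    rcases lt_or_ge (j : ℤ) (ρ (j / N) - 1) with h | h
    · exact mem_union_left _ (mem_dueBefore.2 ⟨hjn, h⟩)
    · refine mem_union_right _ (mem_image.2 ⟨j / N, ?_, by omega⟩)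
      exact mem_range.2 (div_lt_of_lt_mul_right hjn)
  calc #(dueBefore N n ρ)
      ≤ #(dueBefore N n fun i => ρ i - 1) + #((range n).image fun i => (ρ i - 1).toNat) :=
        (card_le_card hsub).trans (card_union_le _ _)
    _ ≤ #(dueBefore N n fun i => ρ i - 1) + n := by
        gcongr
        exact card_image_le.trans (card_range n).le

theorem card_filter_delayed_phase_le {m : ℕ} {e : ℕ → ℕ} (he : ∀ i, i ≤ e i ∧ e i < i + m)
    (l i : ℕ) : #{j ∈ range (l * N) | e (j / N) = i} ≤ m * N := by
  have hsub : {j ∈ range (l * N) | e (j / N) = i} ⊆ Ico ((i + 1 - m) * N) ((i + 1) * N) := by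
    intro j hj
    obtain ⟨hjl, rfl⟩ := mem_filter.1 hj
    have hN : 0 < N := Nat.pos_of_mul_pos_left (Nat.zero_lt_of_lt (mem_range.1 hjl))
    obtain ⟨hle, hlt⟩ := he (j / N)
    rw [mem_Ico, ← Nat.le_div_iff_mul_le hN, ← Nat.div_lt_iff_lt_mul hN]
    generalize j / N = q at hle hlt ⊢
    omega
  calc _ ≤ #(Ico ((i + 1 - m) * N) ((i + 1) * N)) := card_le_card hsub
    _ = (i + 1 - (i + 1 - m)) * N := by rw [Nat.card_Ico, ← Nat.sub_mul]
    _ ≤ m * N := by gcongr; omega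

theorem OPT2_phaseInstance_le_of_delay {m : ℕ} {e : ℕ → ℕ} (hc₀ : 0 ≤ c 0) (hc₁ : 0 ≤ c 1)
    (hB₀ : 1 ≤ B 0) (hB₁ : m * N ≤ B 1) (R : ReleaseSeq N) (n : ℕ)
    (he : ∀ i, i ≤ e i ∧ e i < i + m) :
    OPT2 c B (R.phaseInstance n) ≤
      c 0 * #(dueBefore N n fun i => R (e i)) + c 1 * #((range n).image e) := by
  refine OPT2_le_of_alone_or_large (key := fun j => e (j / N)) (ρ := R) hc₀ hc₁ hB₀
    (fun i _ => (card_filter_delayed_phase_le he n i).trans hB₁)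
    (fun j hj _ => mem_image_of_mem e (mem_range.2 (div_lt_of_lt_mul_right (mem_range.1 hj))))
    fun j hj hjW => ⟨R.mono (he _).1, ?_⟩
  by_contra! hlt
  exact hjW (mem_dueBefore.2 ⟨mem_range.1 hj, hlt⟩)

theorem OPT2_phaseInstance_le (hc₀ : 0 ≤ c 0) (hc₁ : 0 ≤ c 1) (hB₀ : 1 ≤ B 0) (hB₁ : N ≤ B 1)
    (R : ReleaseSeq N) (n : ℕ) : OPT2 c B (R.phaseInstance n) ≤ c 1 * n := by
  have hempty : dueBefore N n R = ∅ := filter_eq_empty_iff.2 fun j hj =>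
    ((R.phaseInstance n).window j hj).not_gt
  have h := OPT2_phaseInstance_le_of_delay (m := 1) (e := id) hc₀ hc₁ hB₀ (by omega) R n (by simp)
  simpa [hempty] using h

/-- The least integer `≥ i` congruent to `p` modulo `2`: the release of this index is where the
schedule of parity `p` executes the large batch serving phase `i`. -/
def roundUp (p i : ℕ) : ℕ := i + (i + p) % 2

theorem card_image_roundUp_add_card_image_roundUp_le (n : ℕ) :
    #((range n).image (roundUp 0)) + #((range n).image (roundUp 1)) ≤ n + 1 := by
  have hdisj : Disjoint ((range n).image (roundUp 0)) ((range n).image (roundUp 1)) := by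
    simp only [disjoint_left, mem_image, roundUp]
    rintro _ ⟨i, -, rfl⟩ ⟨i', -, h⟩
    omega
  rw [← card_union_of_disjoint hdisj, ← card_range (n + 1)]
  refine card_le_card fun i hi => ?_
  simp only [mem_union, mem_image, mem_range, roundUp] at hi ⊢
  omega

theorem card_dueBefore_roundUp_add_card_dueBefore_roundUp_le (R : ReleaseSeq N) (n : ℕ) :
    #(dueBefore N n fun i => R (roundUp 0 i)) + #(dueBefore N n fun i => R (roundUp 1 i)) ≤
      #(dueBefore N n fun i => R (i + 1)) := by
  have hnot : ∀ {j i : ℕ}, j / N = i → ¬ (j : ℤ) < R i := by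
    rintro j _ rfl
    exact ((R.le _).trans (by exact_mod_cast Nat.div_mul_le_self j N)).not_gt
  have hdisj : Disjoint (dueBefore N n fun i => R (roundUp 0 i))
      (dueBefore N n fun i => R (roundUp 1 i)) := by
    rw [disjoint_left]
    intro j h₀ h₁
    rw [mem_dueBefore] at h₀ h₁
    rcases Nat.mod_two_eq_zero_or_one (j / N) with h | h
    · exact hnot (by simp [roundUp, h]) h₀.2
    · exact hnot (by simp [roundUp]; omega) h₁.2
  rw [← card_union_of_disjoint hdisj]
  refine card_le_card fun j hj => ?_
  simp only [mem_union, mem_dueBefore] at hj ⊢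
  have hround : ∀ p, R (roundUp p (j / N)) ≤ R (j / N + 1) := fun p =>
    R.mono (by unfold roundUp; omega)
  rcases hj with hj | hj <;> exact ⟨hj.1, hj.2.trans_le (hround _)⟩

theorem two_mul_OPT2_phaseInstance_le (hc₀ : 0 ≤ c 0) (hc₁ : 0 ≤ c 1) (hB₀ : 1 ≤ B 0)
    (hB₁ : 2 * N ≤ B 1) (R : ReleaseSeq N) (n : ℕ) :
    2 * OPT2 c B (R.phaseInstance n) ≤
      c 0 * #(dueBefore N n fun i => R (i + 1)) + c 1 * (n + 1) := by
  have hopt : ∀ p, OPT2 c B (R.phaseInstance n) ≤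
      c 0 * #(dueBefore N n fun i => R (roundUp p i)) + c 1 * #((range n).image (roundUp p)) :=
    fun p => OPT2_phaseInstance_le_of_delay hc₀ hc₁ hB₀ hB₁ R n
      fun i => by unfold roundUp; omega
  calc 2 * OPT2 c B (R.phaseInstance n)
      ≤ c 0 * (#(dueBefore N n fun i => R (roundUp 0 i)) +
            #(dueBefore N n fun i => R (roundUp 1 i)) : ℕ) +
          c 1 * (#((range n).image (roundUp 0)) + #((range n).image (roundUp 1)) : ℕ) := by
        push_cast
        linarith [hopt 0, hopt 1]
    _ ≤ c 0 * #(dueBefore N n fun i => R (i + 1)) + c 1 * (n + 1 : ℕ) := by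
        have hdue := card_dueBefore_roundUp_add_card_dueBefore_roundUp_le R n
        have hlarge := card_image_roundUp_add_card_image_roundUp_le n
        gcongr ?_ * (?_ : ℕ) + ?_ * (?_ : ℕ)
    _ = c 0 * #(dueBefore N n fun i => R (i + 1)) + c 1 * (n + 1) := by push_cast; rfl

end OfflineCost

/-- On the instance with `n` phases, the first large batch that `A` executes at or after the
release `R i` of phase `i` is executed right before the next release. -/
def TracksLargeBatches (A : SchedInstance → Finset Batch) {N : ℕ} (R : ReleaseSeq N) (n : ℕ) :
    Prop :=
  ∀ i < n, IsLeast (↑(largeTimes (A (R.phaseInstance n))) ∩ Set.Ici (R i)) (R (i + 1) - 1)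

section OnlineCost

variable {A : SchedInstance → Finset Batch} {c : ℕ → ℝ} {B : ℕ → ℕ} {N n : ℕ} {R : ReleaseSeq N}

theorem TracksLargeBatches.lt_succ (h : TracksLargeBatches A R n) {i : ℕ} (hi : i < n) :
    R i < R (i + 1) := by
  have : R i ≤ R (i + 1) - 1 := (h i hi).1.2
  omega

theorem TracksLargeBatches.le_card_largeTimes (h : TracksLargeBatches A R n) :
    n ≤ #(largeTimes (A (R.phaseInstance n))) := by
  have hinj : Set.InjOn (fun i => R (i + 1) - 1) (range n) := by
    refine StrictMonoOn.injOn fun i _ i' hi' hlt => ?_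
    have := R.mono (show i + 1 ≤ i' from hlt)
    have := h.lt_succ (by simpa using hi')
    omega
  calc n = #((range n).image fun i => R (i + 1) - 1) := by
        rw [card_image_of_injOn hinj, card_range]
    _ ≤ #(largeTimes (A (R.phaseInstance n))) :=
        card_le_card (image_subset_iff.2 fun i hi => (h i (mem_range.1 hi)).1.1)

theorem TracksLargeBatches.le_schedCost (h : TracksLargeBatches A R n)
    (hvalid : ∀ P, ValidSchedule2 B P (A P)) (hc₀ : 0 ≤ c 0) (hc₁ : 0 ≤ c 1) (hB₀ : B 0 ≤ 1) :
    c 0 * #(dueBefore N n fun i => R (i + 1) - 1) + c 1 * n ≤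
      schedCost c (A (R.phaseInstance n)) := by
  have hmiss : ∀ j ∈ dueBefore N n fun i => R (i + 1) - 1,
      ∀ t ∈ largeTimes (A (R.phaseInstance n)), t ∉ Set.Icc (R (j / N)) j := by
    rintro j hj t ht ⟨hrt, htd⟩
    obtain ⟨hjn, hjR⟩ := mem_dueBefore.1 hj
    exact (htd.trans_lt hjR).not_ge ((h _ (div_lt_of_lt_mul_right hjn)).2 ⟨ht, hrt⟩)
  calc c 0 * #(dueBefore N n fun i => R (i + 1) - 1) + c 1 * n
      ≤ c 0 * #(dueBefore N n fun i => R (i + 1) - 1) +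
          c 1 * #(largeTimes (A (R.phaseInstance n))) := by
        gcongr
        exact h.le_card_largeTimes
    _ ≤ schedCost c (A (R.phaseInstance n)) :=
        le_schedCost_of_forall_notMem_Icc (hvalid _) hc₀ hc₁ hB₀ (filter_subset _ _) hmiss

theorem TracksLargeBatches.two_mul_OPT2_le (h : TracksLargeBatches A R n)
    (hvalid : ∀ P, ValidSchedule2 B P (A P)) (hc₀ : 0 ≤ c 0) (hc₁ : 0 ≤ c 1) (hB₀ : B 0 = 1)
    (hB₁ : 2 * N ≤ B 1) :
    2 * OPT2 c B (R.phaseInstance n) ≤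
      schedCost c (A (R.phaseInstance n)) + c 0 * n + c 1 := by
  have hdue : (#(dueBefore N n fun i => R (i + 1)) : ℝ) ≤
      #(dueBefore N n fun i => R (i + 1) - 1) + n := by
    exact_mod_cast card_dueBefore_le_card_dueBefore_sub_one_add N n fun i => R (i + 1)
  calc 2 * OPT2 c B (R.phaseInstance n)
      ≤ c 0 * #(dueBefore N n fun i => R (i + 1)) + c 1 * (n + 1) :=
        two_mul_OPT2_phaseInstance_le hc₀ hc₁ hB₀.ge hB₁ R n
    _ ≤ c 0 * (#(dueBefore N n fun i => R (i + 1) - 1) + n) + c 1 * (n + 1) := by gcongr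
    _ ≤ schedCost c (A (R.phaseInstance n)) + c 0 * n + c 1 := by
        linarith [h.le_schedCost hvalid hc₀ hc₁ hB₀.le]

theorem TracksLargeBatches.extend (h : TracksLargeBatches A R n) (hA : Causal A) {t : ℤ}
    (ht : IsLeast (↑(largeTimes (A (R.phaseInstance (n + 1)))) ∩ Set.Ici (R n)) t)
    (hRt : R n ≤ t + 1) (htN : t + 1 ≤ ((n + 1) * N : ℕ)) :
    TracksLargeBatches A (R.extend n (t + 1) hRt htN) (n + 1) := by
  set R' := R.extend n (t + 1) hRt htN
  have hR' : ∀ i ≤ n, R' i = R i := fun i hi => if_pos hi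
  have hR'_succ : R' (n + 1) = t + 1 := if_neg (by omega)
  intro i hi
  rcases Nat.lt_succ_iff_lt_or_eq.1 hi with hi | rfl
  · rw [hR' i hi.le, hR' (i + 1) hi]
    refine isLeast_of_forall_le_mem_iff (h i hi) fun s hs => and_congr_left fun _ => ?_
    refine hA.mem_largeTimes_phaseInstance_iff n.le_succ (fun i hi => (hR' i hi.le).symm) ?_
    intro l hnl hl
    have := R.mono (show i + 1 ≤ l by omega)
    rw [hR' l (by omega)]
    omega
  · rw [hR' i le_rfl, hR'_succ, add_sub_cancel_right]
    refine isLeast_of_forall_le_mem_iff ht fun s _ => and_congr_left fun _ => ?_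
    exact hA.mem_largeTimes_phaseInstance_iff le_rfl (fun l hl => (hR' l (by omega)).symm)
      (by omega)

theorem mul_le_schedCost_of_unanswered_phase (hvalid : ∀ P, ValidSchedule2 B P (A P))
    (hc₀ : 0 ≤ c 0) (hc₁ : 0 ≤ c 1) (hB₀ : B 0 ≤ 1)
    (hlate : ∀ t ∈ largeTimes (A (R.phaseInstance (n + 1))), R n ≤ t → ((n + 1) * N : ℕ) ≤ t) :
    c 0 * N ≤ schedCost c (A (R.phaseInstance (n + 1))) := by
  have hjobs : Ico (n * N) ((n + 1) * N) ⊆ (R.phaseInstance (n + 1)).jobs := fun j hj =>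
    mem_range.2 (mem_Ico.1 hj).2
  have hmiss : ∀ j ∈ Ico (n * N) ((n + 1) * N),
      ∀ t ∈ largeTimes (A (R.phaseInstance (n + 1))), t ∉ Set.Icc (R (j / N)) j := by
    rintro j hj t ht ⟨hrt, htd⟩
    obtain ⟨hnj, hjn⟩ := mem_Ico.1 hj
    rw [Nat.div_eq_of_lt_le hnj hjn] at hrt
    have := hlate t ht hrt
    omega
  have h := le_schedCost_of_forall_notMem_Icc (hvalid _) hc₀ hc₁ hB₀ hjobs hmiss
  have hcard : #(Ico (n * N) ((n + 1) * N)) = N := by rw [Nat.card_Ico, ← Nat.sub_mul]; simp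
  rw [hcard] at h
  have : 0 ≤ c 1 * #(largeTimes (A (R.phaseInstance (n + 1)))) := by positivity
  linarith

theorem TracksLargeBatches.exists_succ_or_mul_le_schedCost (h : TracksLargeBatches A R n)
    (hA : Causal A) (hvalid : ∀ P, ValidSchedule2 B P (A P)) (hc₀ : 0 ≤ c 0) (hc₁ : 0 ≤ c 1)
    (hB₀ : B 0 ≤ 1) :
    (∃ R' : ReleaseSeq N, TracksLargeBatches A R' (n + 1)) ∨
      c 0 * N ≤ schedCost c (A (R.phaseInstance (n + 1))) := by
  by_cases hanswer : ∃ t ∈ largeTimes (A (R.phaseInstance (n + 1))),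
      R n ≤ t ∧ t < ((n + 1) * N : ℕ)
  · obtain ⟨s, hs, hRs, hsN⟩ := hanswer
    obtain ⟨t, ht⟩ : ∃ t, IsLeast (↑(largeTimes (A (R.phaseInstance (n + 1)))) ∩ Set.Ici (R n)) t :=
      Int.exists_least_of_bdd ⟨R n, fun _ ht => ht.2⟩ ⟨s, hs, hRs⟩
    have hts : t ≤ s := ht.2 ⟨hs, hRs⟩
    have hRt : R n ≤ t := ht.1.2
    exact .inl ⟨_, h.extend hA ht (by omega) (by omega)⟩
  · push Not at hanswer
    exact .inr (mul_le_schedCost_of_unanswered_phase hvalid hc₀ hc₁ hB₀ hanswer)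

theorem exists_tracksLargeBatches_or_mul_le_schedCost (hA : Causal A)
    (hvalid : ∀ P, ValidSchedule2 B P (A P)) (hc₀ : 0 ≤ c 0) (hc₁ : 0 ≤ c 1) (hB₀ : B 0 ≤ 1)
    (N n : ℕ) :
    (∃ R : ReleaseSeq N, TracksLargeBatches A R n) ∨
      ∃ R : ReleaseSeq N, ∃ m < n, c 0 * N ≤ schedCost c (A (R.phaseInstance (m + 1))) := by
  induction n with
  | zero => exact .inl ⟨.zero N, by simp [TracksLargeBatches]⟩
  | succ n ih =>
    rcases ih with ⟨R, hR⟩ | ⟨R, m, hm, hcost⟩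
    · exact (hR.exists_succ_or_mul_le_schedCost hA hvalid hc₀ hc₁ hB₀).imp_right fun hcost =>
        ⟨R, n, n.lt_succ_self, hcost⟩
    · exact .inr ⟨R, m, hm.trans n.lt_succ_self, hcost⟩

end OnlineCost

theorem two_sub_mul_le_of_two_mul_le_add {ε M opt cost : ℝ} (hM : 0 ≤ M) (hMε : 4 ≤ ε * M)
    (hopt : 0 ≤ opt) (h : 2 * opt ≤ cost + 2 * M) (hcost : M * M ≤ cost) :
    (2 - ε) * opt ≤ cost := by
  rcases le_or_gt (2 * M) (ε * opt) with hlarge | hsmall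
  · linarith
  · have hε : 0 ≤ ε := (pos_of_mul_pos_left (by linarith) hM).le
    have : 4 * opt ≤ 2 * (M * M) := calc
      4 * opt ≤ ε * M * opt := by gcongr
      _ = ε * opt * M := by ring
      _ ≤ 2 * M * M := by gcongr
      _ = 2 * (M * M) := by ring
    linarith [mul_nonneg hε hopt]

-- The empty instance has optimum `0`, so the bound has content only with `P.jobs.Nonempty`.
theorem online_lower_bound_two_general {ε : ℝ} {M : ℕ} (hMε : 4 ≤ ε * M) {c : ℕ → ℝ}
    {B : ℕ → ℕ} (hc₀ : c 0 = 1) (hc₁ : c 1 = M) (hB₀ : B 0 = 1) (hB₁ : 4 * M ^ 2 ≤ B 1)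
    {A : SchedInstance → Finset Batch} (hA : Causal A)
    (hvalid : ∀ P, ValidSchedule2 B P (A P)) :
    ∃ P : SchedInstance, P.jobs.Nonempty ∧ Agreeable P ∧
      (2 - ε) * OPT2 c B P ≤ schedCost c (A P) := by
  have hc₀' : 0 ≤ c 0 := by simp [hc₀]
  have hc₁' : 0 ≤ c 1 := by simp [hc₁]
  have hM₀ : (0 : ℝ) ≤ M := M.cast_nonneg
  have hε : 0 < ε := pos_of_mul_pos_left (by linarith) hM₀
  have hM : 0 < M := Nat.cast_pos.1 (pos_of_mul_pos_right (by linarith : 0 < ε * M) hε.le)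
  have hN : 0 < 2 * M ^ 2 := by positivity
  rcases exists_tracksLargeBatches_or_mul_le_schedCost hA hvalid hc₀' hc₁' hB₀.le (2 * M ^ 2) M
    with ⟨R, hR⟩ | ⟨R, m, hm, hcost⟩
  · refine ⟨_, R.jobs_phaseInstance_nonempty hM hN, R.agreeable_phaseInstance M, ?_⟩
    have htwo := hR.two_mul_OPT2_le hvalid hc₀' hc₁' hB₀ (by omega)
    have hcost := hR.le_schedCost hvalid hc₀' hc₁' hB₀.le
    rw [hc₀, hc₁] at htwo hcost
    exact two_sub_mul_le_of_two_mul_le_add hM₀ hMε (OPT2_nonneg hc₀' hc₁')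
      (by linarith) (le_of_add_le_of_nonneg_right hcost (by positivity))
  · refine ⟨_, R.jobs_phaseInstance_nonempty m.succ_pos hN, R.agreeable_phaseInstance _, ?_⟩
    have hopt₀ : 0 ≤ OPT2 c B (R.phaseInstance (m + 1)) := OPT2_nonneg hc₀' hc₁'
    have hopt : OPT2 c B (R.phaseInstance (m + 1)) ≤ M * M := calc
      _ ≤ c 1 * (m + 1 : ℕ) := OPT2_phaseInstance_le hc₀' hc₁' hB₀.ge (by omega) R (m + 1)
      _ ≤ M * M := by rw [hc₁]; gcongr; omega
    push_cast [hc₀] at hcost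
    linarith [mul_nonneg hε.le hopt₀]

/-- no deterministic online algorithm has competitive ratio below 2.
For every ε > 0 there are an even integer M and a two-type machine configuration
(type 0: cost 1, capacity 1; type 1: cost M, capacity M³) such that every causal
algorithm producing valid schedules has, on some agreeable instance J,
cost at least (2 − ε)·OPT(J). -/
theorem online_lower_bound_two :
    ∀ ε : ℝ, 0 < ε →
      ∃ M : ℕ, Even M ∧ 0 < M ∧
        ∀ A : SchedInstance → Finset Batch,
          Causal A →
          (∀ P : SchedInstance,
            ValidSchedule2 (fun k => if k = 0 then 1 else M ^ 3) P (A P)) →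
          ∃ P : SchedInstance, Agreeable P ∧
            (2 - ε) * OPT2 (fun k => if k = 0 then (1 : ℝ) else (M : ℝ))
                (fun k => if k = 0 then 1 else M ^ 3) P
              ≤ schedCost (fun k => if k = 0 then (1 : ℝ) else (M : ℝ)) (A P) := by
  intro ε hε
  obtain ⟨M, hMeven, hM, hMε⟩ := (Nat.frequently_even.and_eventually
    ((Filter.eventually_ge_atTop 4).and (Filter.eventually_ge_atTop ⌈4 / ε⌉₊))).exists
  refine ⟨M, hMeven, by omega, fun A hA hvalid => ?_⟩
  have hcap : 4 * M ^ 2 ≤ M ^ 3 := by rw [pow_succ' M 2]; gcongr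
  obtain ⟨P, -, hP⟩ := online_lower_bound_two_general (B := fun k => if k = 0 then 1 else M ^ 3)
    (c := fun k => if k = 0 then 1 else (M : ℝ))
    ((div_le_iff₀' hε).1 (Nat.ceil_le.1 hMε)) rfl rfl rfl hcap hA hvalid
  exact ⟨P, hP⟩
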